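/- Let p ≥ 1 be real, let α, β, γ ∈ (0,1) with α + β + γ = 1, and let P_XY ∈ P_n(X_n × Y_n) be a joint type whose marginals satisfy E_{P_X}[|X|^p] ≤ c_X and E_{P_Y}[|Y|^p] ≤ c_Y. Then, with c₁ = [ (3√π/2)( 2^{max{0, 1/2 − 1/p}} (c_X + c_Y)^{1/p} + 1/√6 ) ]^{2p/(2+p)}, c₂ = (4 c_X^{1/p} + 1)^{p/(1+p)}, c₃ = (4 c_Y^{1/p} + 1)^{p/(1+p)}: (i) H(P_XY) − c₁ log_b(n+1)/n^{γp/(2+p)} ≤ (1/n) log_b |T(P_XY)| ≤ H(P_XY); (ii) H(P_X) − c₂ log_b(n+1)/n^{(1−α)p/(1+p)} ≤ (1/n) log_b |T(P_X)| ≤ H(P_X); (iii) H(P_Y) − c₃ log_b(n+1)/n^{(1−β)p/(1+p)} ≤ (1/n) log_b |T(P_Y)| ≤ H(P_Y). -/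

import Mathlib

open Set

noncomputable section

/-- A joint type with denominator `n` on the product of lattice alphabets
`{iΔx : i ∈ ℤ} × {jΔy : j ∈ ℤ}`. -/
def IsJointType (n : ℕ) (Δx Δy : ℝ) (P : ℝ × ℝ → ℝ) : Prop :=
  (∀ z, 0 ≤ P z) ∧
    (∀ z, P z ≠ 0 → (∃ i : ℤ, z.1 = (i : ℝ) * Δx) ∧ ∃ j : ℤ, z.2 = (j : ℝ) * Δy) ∧
    (∀ z, ∃ k : ℕ, P z = (k : ℝ) / n) ∧ (Function.support P).Finite ∧ ∑ᶠ z, P z = 1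

/-- The `x`-marginal of a joint type. -/
def margX (P : ℝ × ℝ → ℝ) (x : ℝ) : ℝ := ∑ᶠ y, P (x, y)

/-- The `y`-marginal of a joint type. -/
def margY (P : ℝ × ℝ → ℝ) (y : ℝ) : ℝ := ∑ᶠ x, P (x, y)

/-- Empirical distribution of a sequence `z` of length `n`. -/
def empDist {γ : Type*} (n : ℕ) (z : Fin n → γ) (a : γ) : ℝ :=
  (({k : Fin n | z k = a}).ncard : ℝ) / n

/-- The type class `T(P)`: sequences of length `n` whose empirical distribution equals `P`. -/
def typeClass {γ : Type*} (n : ℕ) (P : γ → ℝ) : Set (Fin n → γ) :=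
  {z | ∀ a, empDist n z a = P a}

/-- Entropy with base-`b` logarithm. -/
def entropy {γ : Type*} (b : ℝ) (P : γ → ℝ) : ℝ := -∑ᶠ a, P a * Real.logb b (P a)

/-- `c₁` of Lemma 2. -/
def c1 (p cX cY : ℝ) : ℝ :=
  ((3 * Real.sqrt Real.pi / 2) *
      ((2 : ℝ) ^ (max 0 (1 / 2 - 1 / p)) * (cX + cY) ^ (1 / p) + 1 / Real.sqrt 6)) ^
    (2 * p / (2 + p))

/-- `c₂` of Lemma 2. -/
def c2 (p cX : ℝ) : ℝ := (4 * cX ^ (1 / p) + 1) ^ (p / (1 + p))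

/-- `c₃` of Lemma 2. -/
def c3 (p cY : ℝ) : ℝ := (4 * cY ^ (1 / p) + 1) ^ (p / (1 + p))

/-!
The size of the type class of a type `P` with denominator `n` is a multinomial coefficient. In the
expansion of `n ^ n = (∑ a, n * P a) ^ n` by the multinomial theorem the term of `P` itself is the
largest of at most `(n + 1) ^ #supp P` terms, so
`b ^ (n * H(P)) / (n + 1) ^ #supp P ≤ |T(P)| ≤ b ^ (n * H(P))`, and everything reduces to a bound on
the size of the support. Each point of the support has probability at least `1 / n`, so the moment
constraint and the power mean inequality bound the average norm of these points from above. On the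
other hand, comparing a sum over lattice points with a sum or integral of the cone `(R - ‖w‖)⁺`, for
a suitable radius `R`, shows that the average norm of `k` distinct lattice points grows at least
like `k` on the line and like `√k` in the plane.
-/

section TypeClassSize

open Finset
open scoped Nat

lemma factorial_mul_pow_le_factorial_mul_pow_self (m k : ℕ) : m ! * m ^ k ≤ k ! * m ^ m := by
  rcases le_total m k with h | h
  · calc m ! * m ^ k = m ! * m ^ (k - m) * m ^ m := by
          rw [mul_assoc, ← pow_add, Nat.sub_add_cancel h]
      _ ≤ k ! * m ^ m := Nat.mul_le_mul_right _ (Nat.factorial_mul_pow_sub_le_factorial h)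
  · obtain ⟨d, rfl⟩ := Nat.exists_eq_add_of_le h
    have hfact : (k + d)! ≤ k ! * (k + d) ^ d := by
      rw [← Nat.factorial_mul_ascFactorial]
      exact Nat.mul_le_mul_left _ (Nat.ascFactorial_le_pow_add _ _)
    calc (k + d)! * (k + d) ^ k ≤ k ! * (k + d) ^ d * (k + d) ^ k := Nat.mul_le_mul_right _ hfact
      _ = k ! * (k + d) ^ (k + d) := by ring

/-- A multinomial distribution with rational weights puts its largest mass on its mean. -/
lemma multinomial_mul_prod_pow_le_self {γ : Type*} {s : Finset γ} {f g : γ → ℕ}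
    (h : ∑ a ∈ s, g a = ∑ a ∈ s, f a) :
    Nat.multinomial s g * ∏ a ∈ s, f a ^ g a ≤ Nat.multinomial s f * ∏ a ∈ s, f a ^ f a := by
  have hpos : 0 < (∏ a ∈ s, (g a)!) * ∏ a ∈ s, (f a)! := by positivity
  have hprod : (∏ a ∈ s, (f a)!) * ∏ a ∈ s, f a ^ g a ≤
      (∏ a ∈ s, (g a)!) * ∏ a ∈ s, f a ^ f a := by
    simp only [← prod_mul_distrib]
    exact prod_le_prod' fun a _ => factorial_mul_pow_le_factorial_mul_pow_self _ _
  refine Nat.le_of_mul_le_mul_left ?_ hpos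
  calc (∏ a ∈ s, (g a)!) * (∏ a ∈ s, (f a)!) * (Nat.multinomial s g * ∏ a ∈ s, f a ^ g a)
      = ((∏ a ∈ s, (g a)!) * Nat.multinomial s g) *
          ((∏ a ∈ s, (f a)!) * ∏ a ∈ s, f a ^ g a) := by ring
    _ ≤ ((∏ a ∈ s, (f a)!) * Nat.multinomial s f) *
          ((∏ a ∈ s, (g a)!) * ∏ a ∈ s, f a ^ f a) := by
        rw [Nat.multinomial_spec, Nat.multinomial_spec, h]
        exact Nat.mul_le_mul_left _ hprod
    _ = (∏ a ∈ s, (g a)!) * (∏ a ∈ s, (f a)!) * (Nat.multinomial s f * ∏ a ∈ s, f a ^ f a) := by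
        ring

lemma card_piAntidiag_le {γ : Type*} [DecidableEq γ] (s : Finset γ) (n : ℕ) :
    #(s.piAntidiag n) ≤ (n + 1) ^ #s := by
  calc #(s.piAntidiag n) ≤ #(s.pi fun _ => range (n + 1)) := by
        refine card_le_card_of_injOn (fun k a _ => k a) (fun k hk => ?_) fun k hk l hl hkl => ?_
        · simp only [mem_coe, mem_piAntidiag] at hk
          simp only [mem_coe, Finset.mem_pi, Finset.mem_range]
          exact fun a ha => Nat.lt_succ_of_le <|
            (single_le_sum (f := k) (fun _ _ => Nat.zero_le _) ha).trans hk.1.le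
        · simp only [mem_coe, mem_piAntidiag] at hk hl
          funext a
          by_cases ha : a ∈ s
          · exact congrFun (congrFun hkl a) ha
          · rw [not_imp_comm.1 (hk.2 a) ha, not_imp_comm.1 (hl.2 a) ha]
    _ = (n + 1) ^ #s := by simp [Finset.card_pi]

variable {γ : Type*}

lemma multinomial_mul_prod_pow_self_le (c : γ →₀ ℕ) :
    c.multinomial * ∏ a ∈ c.support, c a ^ c a ≤ c.degree ^ c.degree := by
  classical
  have hmem : ⇑c ∈ piAntidiag c.support c.degree := by
    simp [mem_piAntidiag, Finsupp.degree_apply]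
  conv_rhs => rw [Finsupp.degree_apply, sum_pow_eq_sum_piAntidiag]
  exact single_le_sum (f := fun k => Nat.multinomial c.support k * ∏ a ∈ c.support, c a ^ k a)
    (fun _ _ => Nat.zero_le _) hmem

lemma degree_pow_degree_le (c : γ →₀ ℕ) :
    c.degree ^ c.degree ≤
      (c.degree + 1) ^ #c.support * (c.multinomial * ∏ a ∈ c.support, c a ^ c a) := by
  classical
  calc c.degree ^ c.degree
      = ∑ k ∈ piAntidiag c.support c.degree,
          Nat.multinomial c.support k * ∏ a ∈ c.support, c a ^ k a := by
        conv_lhs => rw [Finsupp.degree_apply, sum_pow_eq_sum_piAntidiag]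
        rfl
    _ ≤ #(piAntidiag c.support c.degree) • (c.multinomial * ∏ a ∈ c.support, c a ^ c a) :=
        sum_le_card_nsmul _ _ _ fun k hk =>
          multinomial_mul_prod_pow_le_self (mem_piAntidiag.1 hk).1
    _ ≤ (c.degree + 1) ^ #c.support * (c.multinomial * ∏ a ∈ c.support, c a ^ c a) :=
        Nat.mul_le_mul_right _ (card_piAntidiag_le _ _)

/-- The counts of a finite sequence: how often each letter occurs. -/
def counts {n : ℕ} (z : Fin n → γ) : γ →₀ ℕ := ∑ i, Finsupp.single (z i) 1

/-- The type (empirical distribution) whose counts are `c`; its denominator is `c.degree`. Types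
are handled through their counts, so that marginalisation becomes `Finsupp.mapDomain`. -/
def freq (c : γ →₀ ℕ) (a : γ) : ℝ := c a / c.degree

lemma counts_apply {n : ℕ} (z : Fin n → γ) (a : γ) : counts z a = {k | z k = a}.ncard := by
  classical
  simp [counts, Finsupp.finsetSum_apply, Finsupp.single_apply, sum_boole,
    Set.ncard_eq_toFinset_card']

lemma coeff_sum_X_pow_eq_card (s : Finset γ) (n : ℕ) (d : γ →₀ ℕ) [DecidableEq γ] :
    MvPolynomial.coeff d ((∑ a ∈ s, MvPolynomial.X a : MvPolynomial γ ℕ) ^ n) =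
      #{z ∈ Fintype.piFinset fun _ : Fin n => s | counts z = d} := by
  rw [sum_pow', MvPolynomial.coeff_sum, card_filter]
  refine sum_congr rfl fun z _ => ?_
  have hmonomial : ∏ i, (MvPolynomial.X (z i) : MvPolynomial γ ℕ) =
      MvPolynomial.monomial (counts z) 1 := (MvPolynomial.monomial_sum_one _ _).symm
  rw [hmonomial, MvPolynomial.coeff_monomial]

lemma coeff_sum_X_pow_degree (c : γ →₀ ℕ) :
    MvPolynomial.coeff c
      ((∑ a ∈ c.support, MvPolynomial.X a : MvPolynomial γ ℕ) ^ c.degree) = c.multinomial := by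
  classical
  have hlin : (∑ a ∈ c.support, MvPolynomial.X a : MvPolynomial γ ℕ) =
      (∑ a ∈ c.support, Finsupp.single a 1).linearCombination ℕ MvPolynomial.X := by
    simp
  rw [hlin, MvPolynomial.coeff_linearCombination_X_pow, if_pos (by rfl), Finsupp.prod, prod_eq_one]
  · simp
  · intro a ha
    simp_all [Finsupp.finsetSum_apply, Finsupp.single_apply]

lemma ncard_setOf_counts_eq (c : γ →₀ ℕ) :
    {z : Fin c.degree → γ | counts z = c}.ncard = c.multinomial := by
  classical
  have hset : {z : Fin c.degree → γ | counts z = c} =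
      ↑({z ∈ Fintype.piFinset fun _ => c.support | counts z = c} :
        Finset (Fin c.degree → γ)) := by
    ext z
    simp only [coe_filter, Fintype.mem_piFinset, Set.mem_ofPred_eq, iff_and_self]
    intro h i
    rw [Finsupp.mem_support_iff, ← DFunLike.congr_fun h (z i), counts_apply]
    exact Set.ncard_ne_zero_of_mem (a := i) rfl
  rw [hset, Set.ncard_coe_finset, ← coeff_sum_X_pow_eq_card, coeff_sum_X_pow_degree]

lemma ncard_typeClass_freq {c : γ →₀ ℕ} (hc : c ≠ 0) :
    (typeClass c.degree (freq c)).ncard = c.multinomial := by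
  have hdeg : (c.degree : ℝ) ≠ 0 := by simpa [Finsupp.degree_eq_zero_iff] using hc
  rw [← ncard_setOf_counts_eq]
  congr 1
  ext z
  simp only [typeClass, empDist, freq, Set.mem_ofPred_eq, Finsupp.ext_iff, counts_apply,
    div_left_inj' hdeg, Nat.cast_inj]

lemma finsum_freq_mul (c : γ →₀ ℕ) (g : γ → ℝ) :
    ∑ᶠ a, freq c a * g a = (∑ a ∈ c.support, c a * g a) / c.degree := by
  rw [finsum_eq_sum_of_support_subset (s := c.support), sum_div]
  · exact sum_congr rfl fun a _ => div_mul_eq_mul_div _ _ _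
  · intro a ha
    contrapose! ha
    simp_all [freq]

lemma degree_mul_entropy_freq (b : ℝ) {c : γ →₀ ℕ} (hc : c ≠ 0) :
    c.degree * entropy b (freq c) =
      c.degree * Real.logb b c.degree - ∑ a ∈ c.support, c a * Real.logb b (c a) := by
  have hdeg : (c.degree : ℝ) ≠ 0 := by simpa [Finsupp.degree_eq_zero_iff] using hc
  have hlog : ∀ a ∈ c.support,
      c a * Real.logb b (freq c a) = c a * Real.logb b (c a) - c a * Real.logb b c.degree := by
    intro a ha
    have ha : (c a : ℝ) ≠ 0 := by simpa using ha
    rw [freq, Real.logb_div ha hdeg, mul_sub]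
  rw [entropy, finsum_freq_mul, sum_congr rfl hlog, sum_sub_distrib, ← sum_mul,
    ← Nat.cast_sum, ← Finsupp.degree_apply]
  field_simp
  ring

lemma logb_prod_pow_self (b : ℝ) (c : γ →₀ ℕ) :
    Real.logb b (∏ a ∈ c.support, (c a : ℝ) ^ c a) =
      ∑ a ∈ c.support, c a * Real.logb b (c a) := by
  rw [Real.logb_prod _ _ fun a ha => pow_ne_zero _ (by simpa using ha)]
  exact sum_congr rfl fun a _ => Real.logb_pow ..

lemma logb_ncard_typeClass_le {b : ℝ} (hb : 1 < b) {c : γ →₀ ℕ} (hc : c ≠ 0) :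
    1 / (c.degree : ℝ) * Real.logb b (typeClass c.degree (freq c)).ncard ≤
      entropy b (freq c) := by
  have hdeg : 0 < (c.degree : ℝ) := by
    simpa [pos_iff_ne_zero, Finsupp.degree_eq_zero_iff] using hc
  have hM : 0 < (c.multinomial : ℝ) := mod_cast Nat.multinomial_pos _ _
  have hQ : 0 < ∏ a ∈ c.support, (c a : ℝ) ^ c a :=
    prod_pos fun a ha => pow_pos (by simpa [pos_iff_ne_zero] using ha) _
  have hle : (c.multinomial : ℝ) * ∏ a ∈ c.support, (c a : ℝ) ^ c a ≤ c.degree ^ c.degree :=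
    mod_cast multinomial_mul_prod_pow_self_le c
  have hlog := Real.logb_le_logb_of_le hb (by positivity) hle
  rw [Real.logb_mul hM.ne' hQ.ne', logb_prod_pow_self, Real.logb_pow] at hlog
  rw [ncard_typeClass_freq hc, one_div_mul_eq_div, div_le_iff₀' hdeg,
    degree_mul_entropy_freq b hc]
  linarith

lemma entropy_sub_le_logb_ncard_typeClass {b : ℝ} (hb : 1 < b) {c : γ →₀ ℕ} (hc : c ≠ 0) :
    entropy b (freq c) - #c.support / c.degree * Real.logb b (c.degree + 1) ≤
      1 / (c.degree : ℝ) * Real.logb b (typeClass c.degree (freq c)).ncard := by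
  have hdeg : 0 < (c.degree : ℝ) := by
    simpa [pos_iff_ne_zero, Finsupp.degree_eq_zero_iff] using hc
  have hM : 0 < (c.multinomial : ℝ) := mod_cast Nat.multinomial_pos _ _
  have hQ : 0 < ∏ a ∈ c.support, (c a : ℝ) ^ c a :=
    prod_pos fun a ha => pow_pos (by simpa [pos_iff_ne_zero] using ha) _
  have hle : (c.degree : ℝ) ^ c.degree ≤ (c.degree + 1 : ℝ) ^ #c.support *
      (c.multinomial * ∏ a ∈ c.support, (c a : ℝ) ^ c a) := mod_cast degree_pow_degree_le c
  have hlog := Real.logb_le_logb_of_le hb (by positivity) hle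
  rw [Real.logb_mul (by positivity) (by positivity), Real.logb_mul hM.ne' hQ.ne',
    logb_prod_pow_self, Real.logb_pow, Real.logb_pow] at hlog
  rw [ncard_typeClass_freq hc, one_div_mul_eq_div, le_div_iff₀' hdeg, mul_sub,
    degree_mul_entropy_freq b hc, ← mul_assoc, mul_div_cancel₀ _ hdeg.ne']
  linarith

lemma typeClass_bounds_of_card_support_le {b : ℝ} (hb : 1 < b) {c : γ →₀ ℕ} (hc : c ≠ 0)
    {n : ℕ} (hn : c.degree = n) {K X : ℝ} (h : #c.support / n ≤ K / X) :
    entropy b (freq c) - K * Real.logb b (n + 1) / X ≤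
        1 / (n : ℝ) * Real.logb b (typeClass n (freq c)).ncard ∧
      1 / (n : ℝ) * Real.logb b (typeClass n (freq c)).ncard ≤ entropy b (freq c) := by
  subst hn
  refine ⟨le_trans ?_ (entropy_sub_le_logb_ncard_typeClass hb hc), logb_ncard_typeClass_le hb hc⟩
  have hlog : 0 ≤ Real.logb b (c.degree + 1) := Real.logb_nonneg hb (by simp)
  rw [mul_div_right_comm]
  gcongr

end TypeClassSize

section Marginal

open Finset

variable {γ δ : Type*}

lemma sum_support_le_degree_mul_finsum {c : γ →₀ ℕ} {g : γ → ℝ} (hg : ∀ a, 0 ≤ g a) :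
    ∑ a ∈ c.support, g a ≤ c.degree * ∑ᶠ a, freq c a * g a := by
  rcases eq_or_ne c 0 with rfl | hc
  · simp
  have hdeg : (c.degree : ℝ) ≠ 0 := by simpa [Finsupp.degree_eq_zero_iff] using hc
  rw [finsum_freq_mul, mul_div_cancel₀ _ hdeg]
  refine sum_le_sum fun a ha => le_mul_of_one_le_left (hg a) ?_
  exact mod_cast Nat.one_le_iff_ne_zero.2 (Finsupp.mem_support_iff.1 ha)

lemma card_support_le_degree (c : γ →₀ ℕ) : #c.support ≤ c.degree := by
  rw [card_eq_sum_ones, Finsupp.degree_apply]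
  exact sum_le_sum fun a ha => Nat.one_le_iff_ne_zero.2 (Finsupp.mem_support_iff.1 ha)

lemma finsum_freq_mapDomain_mul (f : γ → δ) (c : γ →₀ ℕ) (g : δ → ℝ) :
    ∑ᶠ x, freq (c.mapDomain f) x * g x = ∑ᶠ a, freq c a * g (f a) := by
  simp only [finsum_freq_mul, Finsupp.degree_mapDomain]
  congr 1
  exact Finsupp.sum_mapDomain_index (h := fun x (m : ℕ) => (m : ℝ) * g x) (by simp)
    fun _ _ _ => by push_cast; ring

lemma freq_mapDomain_apply (f : γ → δ) (c : γ →₀ ℕ) (x : δ) :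
    freq (c.mapDomain f) x = ∑ᶠ a ∈ f ⁻¹' {x}, freq c a := by
  have h := finsum_freq_mapDomain_mul f c (Set.indicator {x} 1)
  have hfiber : ∀ a, Set.indicator {x} (1 : δ → ℝ) (f a) = Set.indicator (f ⁻¹' {x}) 1 a :=
    fun _ => rfl
  simp only [hfiber, ← Set.indicator_mul_right _ (freq _), Pi.one_apply, mul_one] at h
  rwa [← finsum_mem_def, ← finsum_mem_def, finsum_mem_singleton] at h

lemma margX_freq (c : ℝ × ℝ →₀ ℕ) : margX (freq c) = freq (c.mapDomain Prod.fst) := by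
  funext x
  have hfiber : Prod.fst ⁻¹' {x} = Set.range fun y : ℝ => (x, y) := by
    ext
    simp [Prod.ext_iff, eq_comm]
  rw [freq_mapDomain_apply, hfiber, finsum_mem_range (Prod.mk_right_injective x), margX]

lemma margY_freq (c : ℝ × ℝ →₀ ℕ) : margY (freq c) = freq (c.mapDomain Prod.snd) := by
  funext y
  have hfiber : Prod.snd ⁻¹' {y} = Set.range fun x : ℝ => (x, y) := by
    ext
    simp [Prod.ext_iff, eq_comm]
  rw [freq_mapDomain_apply, hfiber, finsum_mem_range (Prod.mk_left_injective y), margY]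

lemma IsJointType.exists_eq_freq {n : ℕ} {Δx Δy : ℝ} {P : ℝ × ℝ → ℝ}
    (hP : IsJointType n Δx Δy P) : ∃ c : ℝ × ℝ →₀ ℕ, c ≠ 0 ∧ c.degree = n ∧ freq c = P := by
  obtain ⟨-, -, hcount, hfin, hsum⟩ := hP
  choose k hk using hcount
  have hn : (n : ℝ) ≠ 0 := by
    intro hn
    simp [hk, hn] at hsum
  have hsupp : Function.support k = Function.support P := by
    ext z
    simp [hk, hn]
  set c : ℝ × ℝ →₀ ℕ := Finsupp.ofSupportFinite k (hsupp ▸ hfin)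
  have hdeg : c.degree = n := by
    have : ∑ᶠ z, (k z : ℝ) / n = ∑ z ∈ c.support, (c z : ℝ) / n :=
      finsum_eq_sum_of_support_subset _ fun z hz => by simp_all [c, Finsupp.ofSupportFinite_coe]
    rw [funext hk, this, ← sum_div, div_eq_one_iff_eq hn] at hsum
    rw [Finsupp.degree_apply]
    exact_mod_cast hsum
  refine ⟨c, ?_, hdeg, ?_⟩
  · rintro hc
    simp [← hdeg, hc] at hn
  · funext z
    rw [freq, hdeg, hk]
    rfl

lemma IsJointType.lattice_of_mem_support {c : ℝ × ℝ →₀ ℕ} {Δx Δy : ℝ}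
    (hP : IsJointType c.degree Δx Δy (freq c)) :
    ∀ z ∈ c.support, (∃ i : ℤ, z.1 = i * Δx) ∧ ∃ j : ℤ, z.2 = j * Δy := by
  intro z hz
  refine hP.2.1 z ?_
  have hc : c ≠ 0 := Finsupp.support_nonempty_iff.1 ⟨z, hz⟩
  simpa [freq, Finsupp.degree_eq_zero_iff, hc] using hz

lemma mapDomain_ne_zero (f : γ → δ) {c : γ →₀ ℕ} (hc : c ≠ 0) : c.mapDomain f ≠ 0 := by
  rwa [Ne, ← Finsupp.degree_eq_zero_iff, Finsupp.degree_mapDomain, Finsupp.degree_eq_zero_iff]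

lemma forall_mem_support_mapDomain {f : γ → δ} {c : γ →₀ ℕ} {q : δ → Prop}
    (h : ∀ a ∈ c.support, q (f a)) : ∀ x ∈ (c.mapDomain f).support, q x := by
  classical
  exact fun x hx => Finset.forall_mem_image.2 h x (Finsupp.mapDomain_support hx)

end Marginal

section CardBound

open Finset

lemma sum_div_card_le_rpow_mul_rpow {γ : Type*} {S : Finset γ} (hS : S.Nonempty) {f : γ → ℝ}
    (hf : ∀ a, 0 ≤ f a) {p N C : ℝ} (hp : 1 ≤ p) (hN : 0 < N) (h : ∑ a ∈ S, f a ^ p ≤ N * C) :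
    (∑ a ∈ S, f a) / #S ≤ C ^ (1 / p) * (N / #S) ^ (1 / p) := by
  have hk : (0 : ℝ) < #S := mod_cast hS.card_pos
  have hNC : 0 ≤ N * C := (sum_nonneg fun a _ => Real.rpow_nonneg (hf a) p).trans h
  have hC : 0 ≤ C := nonneg_of_mul_nonneg_right hNC hN
  have hmean := Real.arith_mean_le_rpow_mean S (fun _ => (#S : ℝ)⁻¹) f (fun _ _ => by positivity)
    (by simp [hk.ne']) (fun a _ => hf a) hp
  calc (∑ a ∈ S, f a) / #S = ∑ a ∈ S, (#S : ℝ)⁻¹ * f a := by rw [← mul_sum, inv_mul_eq_div]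
    _ ≤ (∑ a ∈ S, (#S : ℝ)⁻¹ * f a ^ p) ^ (1 / p) := hmean
    _ ≤ (C * (N / #S)) ^ (1 / p) := by
        have hsum : 0 ≤ ∑ a ∈ S, (#S : ℝ)⁻¹ * f a ^ p :=
          sum_nonneg fun a _ => mul_nonneg (by positivity) (Real.rpow_nonneg (hf a) p)
        refine Real.rpow_le_rpow hsum ?_ (by positivity)
        rw [← mul_sum, inv_mul_eq_div, mul_div_assoc', mul_comm C]
        gcongr
    _ = C ^ (1 / p) * (N / #S) ^ (1 / p) := Real.mul_rpow hC (by positivity)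

lemma inv_le_rpow_div_rpow {X K r s e : ℝ} (hX : 0 < X) (hK : 0 ≤ K) (hr : 0 < r) (he : 0 ≤ e)
    (hse : s * e = 1) (h : X ≤ K * r ^ s) : r⁻¹ ≤ K ^ e / X ^ e := by
  have hpow : X ^ e ≤ K ^ e * r := by
    calc X ^ e ≤ (K * r ^ s) ^ e := Real.rpow_le_rpow hX.le h he
      _ = K ^ e * r := by
        rw [Real.mul_rpow hK (by positivity), ← Real.rpow_mul hr.le, hse, Real.rpow_one]
  rwa [le_div_iff₀ (by positivity), inv_mul_le_iff₀' hr]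

lemma sum_Icc_sub_abs (R : ℕ) : ∑ i ∈ Finset.Icc (-R : ℤ) R, (R - |i|) = (R : ℤ) ^ 2 := by
  induction R with
  | zero => simp
  | succ R ih =>
    have hsub : Finset.Icc (-R : ℤ) R ⊆ Finset.Icc (-(R + 1 : ℕ)) (R + 1 : ℕ) :=
      Finset.Icc_subset_Icc (by simp) (by simp)
    have hzero : ∀ i ∈ Finset.Icc (-(R + 1 : ℕ) : ℤ) (R + 1 : ℕ), i ∉ Finset.Icc (-R : ℤ) R →
        ((R + 1 : ℕ) : ℤ) - |i| = 0 := by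
      intro i hi hi'
      simp only [Finset.mem_Icc, ← abs_le] at hi hi'
      omega
    calc ∑ i ∈ Finset.Icc (-(R + 1 : ℕ) : ℤ) (R + 1 : ℕ), (((R + 1 : ℕ) : ℤ) - |i|)
        = ∑ i ∈ Finset.Icc (-R : ℤ) R, ((R - |i|) + 1) := by
          rw [← sum_subset hsub hzero]
          exact sum_congr rfl fun i _ => by push_cast; ring
      _ = ((R + 1 : ℕ) : ℤ) ^ 2 := by
          rw [sum_add_distrib, ih, sum_const, Int.card_Icc]
          simp
          grind

lemma card_mul_sub_sum_abs_le (S : Finset ℤ) (R : ℕ) : #S * R - ∑ i ∈ S, |i| ≤ (R : ℤ) ^ 2 := by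
  calc #S * R - ∑ i ∈ S, |i| = ∑ i ∈ S, (R - |i|) := by simp
    _ ≤ ∑ i ∈ S with i ∈ Finset.Icc (-R : ℤ) R, (R - |i|) := by
        rw [sum_filter]
        refine sum_le_sum fun i _ => ?_
        split_ifs with hi
        · rfl
        · rw [Finset.mem_Icc, ← abs_le] at hi
          omega
    _ ≤ ∑ i ∈ Finset.Icc (-R : ℤ) R, (R - |i|) := by
        refine sum_le_sum_of_subset_of_nonneg (fun i hi => (mem_filter.1 hi).2) fun i hi _ => ?_
        rw [Finset.mem_Icc, ← abs_le] at hi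
        omega
    _ = (R : ℤ) ^ 2 := sum_Icc_sub_abs R

lemma card_sq_sub_one_le_four_mul_sum_abs (S : Finset ℤ) :
    (#S : ℤ) ^ 2 - 1 ≤ 4 * ∑ i ∈ S, |i| := by
  obtain ⟨m, hm | hm⟩ := Nat.even_or_odd' #S <;>
  · have := card_mul_sub_sum_abs_le S m
    rw [hm] at this ⊢
    push_cast at this ⊢
    linarith

lemma card_sq_sub_one_mul_le_four_mul_sum_abs {Δ : ℝ} (hΔ : 0 < Δ) {S : Finset ℝ}
    (hS : ∀ x ∈ S, ∃ i : ℤ, x = i * Δ) : ((#S : ℝ) ^ 2 - 1) * Δ ≤ 4 * ∑ x ∈ S, |x| := by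
  have hinj : Function.Injective fun i : ℤ => i * Δ := fun i j h => by simpa [hΔ.ne'] using h
  obtain ⟨T, rfl⟩ : ∃ T : Finset ℤ, T.image (fun i : ℤ => i * Δ) = S := by
    have hrange : (S : Set ℝ) ⊆ (fun i : ℤ => i * Δ) '' Set.univ := fun x hx => by
      simpa [eq_comm] using hS x hx
    obtain ⟨T, -, hT⟩ := Finset.subset_set_image_iff.1 hrange
    exact ⟨T, hT⟩
  rw [Finset.card_image_of_injective T hinj, sum_image hinj.injOn]
  simp only [abs_mul, abs_of_pos hΔ, ← sum_mul, ← mul_assoc]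
  gcongr
  exact_mod_cast card_sq_sub_one_le_four_mul_sum_abs T

lemma card_div_le_of_sum_abs_rpow_le {Δ : ℝ} (hΔ : Δ ∈ Set.Ioc 0 1) {S : Finset ℝ}
    (hS : S.Nonempty) (hlattice : ∀ x ∈ S, ∃ i : ℤ, x = i * Δ) {p N C : ℝ} (hp : 1 ≤ p)
    (hN : #S ≤ N) (hC : ∑ x ∈ S, |x| ^ p ≤ N * C) : #S / N ≤ c2 p C / (N * Δ) ^ (p / (1 + p)) := by
  have hk : (1 : ℝ) ≤ #S := mod_cast hS.card_pos
  have hΔ0 := hΔ.1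
  have hN0 : 0 < N := by linarith
  have hmean := sum_div_card_le_rpow_mul_rpow hS abs_nonneg hp hN0 hC
  have hlat := card_sq_sub_one_mul_le_four_mul_sum_abs hΔ0 hlattice
  have hC0 : 0 ≤ C := nonneg_of_mul_nonneg_right
    ((sum_nonneg fun x _ => Real.rpow_nonneg (abs_nonneg x) p).trans hC) hN0
  set r := N / #S
  have hr : 1 ≤ r := (one_le_div (by linarith)).2 hN
  have hrp : 1 ≤ r ^ (1 / p) := Real.one_le_rpow hr (by positivity)
  have hmain : #S * Δ ≤ (4 * C ^ (1 / p) + 1) * r ^ (1 / p) := by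
    calc #S * Δ = ((#S : ℝ) ^ 2 - 1) * Δ / #S + Δ / #S := by field_simp; ring
      _ ≤ 4 * (∑ x ∈ S, |x|) / #S + 1 := by
        gcongr
        exact (div_le_self hΔ0.le hk).trans hΔ.2
      _ ≤ (4 * C ^ (1 / p) + 1) * r ^ (1 / p) := by
        rw [mul_div_assoc]
        linarith
  rw [← inv_div, c2]
  refine inv_le_rpow_div_rpow (s := 1 + 1 / p) (by positivity) (by positivity) (by positivity)
    (by positivity) (by field_simp; ring) ?_
  calc N * Δ = r * (#S * Δ) := by simp only [r]; field_simp
    _ ≤ r * ((4 * C ^ (1 / p) + 1) * r ^ (1 / p)) := by gcongr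
    _ = (4 * C ^ (1 / p) + 1) * r ^ (1 + 1 / p) := by
      rw [Real.rpow_add (by positivity), Real.rpow_one]
      ring

lemma card_support_div_degree_le_c2 {c : ℝ →₀ ℕ} (hc : c ≠ 0) {Δ : ℝ} (hΔ : Δ ∈ Set.Ioc 0 1)
    (hlattice : ∀ x ∈ c.support, ∃ i : ℤ, x = i * Δ) {p C : ℝ} (hp : 1 ≤ p)
    (hC : ∑ᶠ x, freq c x * |x| ^ p ≤ C) :
    #c.support / c.degree ≤ c2 p C / (c.degree * Δ) ^ (p / (1 + p)) := by
  have hmoment : ∑ x ∈ c.support, |x| ^ p ≤ c.degree * C :=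
    (sum_support_le_degree_mul_finsum fun x => by positivity).trans (by gcongr)
  exact card_div_le_of_sum_abs_rpow_le hΔ (Finsupp.support_nonempty_iff.2 hc) hlattice hp
    (mod_cast card_support_le_degree c) hmoment

end CardBound

section Cone

open MeasureTheory

variable {E : Type*} [NormedAddCommGroup E] [MeasurableSpace E] [BorelSpace E]

lemma integrable_max_zero_sub_norm [ProperSpace E] (μ : Measure E) [IsFiniteMeasureOnCompacts μ]
    (R : ℝ) : Integrable (fun w : E => max 0 (R - ‖w‖)) μ := by
  refine Continuous.integrable_of_hasCompactSupport (by fun_prop) <|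
    .of_support_subset_isCompact (isCompact_closedBall (0 : E) R) fun w hw => ?_
  by_contra hw'
  rw [mem_closedBall_zero_iff, not_le] at hw'
  exact hw (max_eq_left (by linarith))

lemma setIntegral_Ioi_pow_mul_max_zero_sub (k : ℕ) {R : ℝ} (hR : 0 ≤ R) :
    ∫ y in Set.Ioi (0 : ℝ), y ^ k * max 0 (R - y) = R ^ (k + 2) / ((k + 1) * (k + 2)) := by
  calc ∫ y in Set.Ioi (0 : ℝ), y ^ k * max 0 (R - y)
      = ∫ y in Set.Ioc (0 : ℝ) R, y ^ k * max 0 (R - y) := by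
        refine setIntegral_eq_of_subset_of_forall_sdiff_eq_zero measurableSet_Ioi
          Set.Ioc_subset_Ioi_self fun y hy => ?_
        have hRy : R < y := not_le.1 fun h => hy.2 ⟨hy.1, h⟩
        rw [max_eq_left (by linarith), mul_zero]
    _ = ∫ y in Set.Ioc (0 : ℝ) R, (R * y ^ k - y ^ (k + 1)) := by
        refine setIntegral_congr_fun measurableSet_Ioc fun y hy => ?_
        simp only [max_eq_right (sub_nonneg.2 hy.2)]
        ring
    _ = ∫ y in (0 : ℝ)..R, (R * y ^ k - y ^ (k + 1)) := (intervalIntegral.integral_of_le hR).symm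
    _ = R ^ (k + 2) / ((k + 1) * (k + 2)) := by
        rw [intervalIntegral.integral_sub (Continuous.intervalIntegrable (by fun_prop) _ _)
          (Continuous.intervalIntegrable (by fun_prop) _ _), intervalIntegral.integral_const_mul,
          integral_pow, integral_pow]
        push_cast
        field_simp
        ring

lemma integral_max_zero_sub_norm [NormedSpace ℝ E] [FiniteDimensional ℝ E] [Nontrivial E]
    (μ : Measure E) [μ.IsAddHaarMeasure] {R : ℝ} (hR : 0 ≤ R) :
    ∫ w : E, max 0 (R - ‖w‖) ∂μ = μ.real (Metric.ball 0 1) *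
      R ^ (Module.finrank ℝ E + 1) / (Module.finrank ℝ E + 1) := by
  obtain ⟨k, hk⟩ := Nat.exists_eq_succ_of_ne_zero (Module.finrank_pos (R := ℝ) (M := E)).ne'
  rw [integral_fun_norm_addHaar μ fun x => max 0 (R - x), hk]
  simp only [Nat.succ_eq_add_one, add_tsub_cancel_right, smul_eq_mul, nsmul_eq_mul,
    setIntegral_Ioi_pow_mul_max_zero_sub k hR]
  push_cast
  field_simp
  ring

lemma integral_complex_max_zero_sub_norm {R : ℝ} (hR : 0 ≤ R) :
    ∫ w : ℂ, max 0 (R - ‖w‖) = Real.pi * R ^ 3 / 3 := by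
  rw [integral_max_zero_sub_norm volume hR, Complex.finrank_real_complex, Measure.real,
    Complex.volume_ball]
  norm_num

lemma mul_measureReal_le_setIntegral_max_zero_sub_norm [ProperSpace E] {μ : Measure E}
    [IsFiniteMeasureOnCompacts μ] {s : Set E} (hs : μ s ≠ ⊤) {z : E}
    (hint : IntegrableOn (fun w => ‖w - z‖ ^ 2) s μ) {t : ℝ} (ht : 0 < t)
    (h : ∫ w in s, ‖w - z‖ ^ 2 ∂μ ≤ t ^ 2 * μ.real s) (R : ℝ) :
    (R - ‖z‖ - t) * μ.real s ≤ ∫ w in s, max 0 (R - ‖w‖) ∂μ := by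
  have hcone : IntegrableOn (fun w => max 0 (R - ‖w‖)) s μ :=
    (integrable_max_zero_sub_norm μ R).integrableOn
  -- AM-GM: `‖w - z‖ ≤ ‖w - z‖ ^ 2 / (2 * t) + t / 2`.
  have hpt : ∀ w : E, R - ‖z‖ - t / 2 ≤ max 0 (R - ‖w‖) + 1 / (2 * t) * ‖w - z‖ ^ 2 := by
    intro w
    have hamgm : ‖w - z‖ ≤ t / 2 + 1 / (2 * t) * ‖w - z‖ ^ 2 := by
      have : t / 2 + 1 / (2 * t) * ‖w - z‖ ^ 2 - ‖w - z‖ = (‖w - z‖ - t) ^ 2 / (2 * t) := by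
        field_simp
        ring
      have : 0 ≤ (‖w - z‖ - t) ^ 2 / (2 * t) := by positivity
      linarith
    have := norm_le_norm_add_norm_sub' w z
    have := le_max_right 0 (R - ‖w‖)
    linarith
  have hmono : (R - ‖z‖ - t / 2) * μ.real s ≤
      ∫ w in s, max 0 (R - ‖w‖) ∂μ + 1 / (2 * t) * ∫ w in s, ‖w - z‖ ^ 2 ∂μ := by
    rw [← integral_const_mul, ← integral_add hcone (hint.const_mul _), mul_comm, ← smul_eq_mul,
      ← setIntegral_const]
    exact integral_mono (integrableOn_const hs) (hcone.add (hint.const_mul _)) hpt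
  have hsq : 1 / (2 * t) * ∫ w in s, ‖w - z‖ ^ 2 ∂μ ≤ t / 2 * μ.real s := by
    calc 1 / (2 * t) * ∫ w in s, ‖w - z‖ ^ 2 ∂μ ≤ 1 / (2 * t) * (t ^ 2 * μ.real s) := by gcongr
      _ = t / 2 * μ.real s := by field_simp
  linarith

end Cone

section Cell

open MeasureTheory

/-- The points of the plane whose coordinates are integer multiples of `Δx` and `Δy`. -/
def rectLattice (Δx Δy : ℝ) : Set ℂ :=
  {z | (∃ i : ℤ, z.re = i * Δx) ∧ ∃ j : ℤ, z.im = j * Δy}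

/-- The half-open `Δx × Δy` rectangle with centre `z`. The cells of the points of
`rectLattice Δx Δy` tile the plane. -/
def cell (Δx Δy : ℝ) (z : ℂ) : Set ℂ :=
  Set.Ioc (z.re - Δx / 2) (z.re + Δx / 2) ×ℂ Set.Ioc (z.im - Δy / 2) (z.im + Δy / 2)

lemma setIntegral_reProdIm_mul (f g : ℝ → ℝ) (s t : Set ℝ) :
    ∫ z in s ×ℂ t, f z.re * g z.im = (∫ x in s, f x) * ∫ y in t, g y := by
  rw [← setIntegral_prod_mul, ← Measure.volume_eq_prod,
    ← Complex.volume_preserving_equiv_real_prod.setIntegral_preimage_emb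
      Complex.measurableEquivRealProd.measurableEmbedding]
  rfl

lemma integral_Ioc_sub_sq (a : ℝ) {d : ℝ} (hd : 0 ≤ d) :
    ∫ x in Set.Ioc (a - d / 2) (a + d / 2), (x - a) ^ 2 = d ^ 3 / 12 := by
  rw [← intervalIntegral.integral_of_le (by linarith),
    intervalIntegral.integral_comp_sub_right (· ^ 2), integral_pow]
  ring

lemma measurableSet_cell (Δx Δy : ℝ) (z : ℂ) : MeasurableSet (cell Δx Δy z) :=
  (Complex.measurable_re measurableSet_Ioc).inter (Complex.measurable_im measurableSet_Ioc)

lemma integrableOn_cell (Δx Δy : ℝ) (z : ℂ) {f : ℂ → ℝ} (hf : Continuous f) :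
    IntegrableOn f (cell Δx Δy z) :=
  (hf.continuousOn.integrableOn_compact (isCompact_Icc.reProdIm isCompact_Icc)).mono_set <|
    Set.inter_subset_inter (Set.preimage_mono Set.Ioc_subset_Icc_self)
      (Set.preimage_mono Set.Ioc_subset_Icc_self)

variable {Δx Δy : ℝ}

lemma volume_real_cell (hx : 0 ≤ Δx) (hy : 0 ≤ Δy) (z : ℂ) :
    volume.real (cell Δx Δy z) = Δx * Δy := by
  have h := setIntegral_reProdIm_mul 1 1 (Set.Ioc (z.re - Δx / 2) (z.re + Δx / 2))
    (Set.Ioc (z.im - Δy / 2) (z.im + Δy / 2))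
  simpa [cell, hx, hy] using h

lemma setIntegral_cell_norm_sub_sq (hx : 0 ≤ Δx) (hy : 0 ≤ Δy) (z : ℂ) :
    ∫ w in cell Δx Δy z, ‖w - z‖ ^ 2 = (Δx ^ 2 + Δy ^ 2) / 12 * (Δx * Δy) := by
  have hre : ∫ w in cell Δx Δy z, (w.re - z.re) ^ 2 = Δx ^ 3 / 12 * Δy := by
    have h := setIntegral_reProdIm_mul (fun x => (x - z.re) ^ 2) 1
      (Set.Ioc (z.re - Δx / 2) (z.re + Δx / 2)) (Set.Ioc (z.im - Δy / 2) (z.im + Δy / 2))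
    simpa [cell, integral_Ioc_sub_sq _ hx, hy] using h
  have him : ∫ w in cell Δx Δy z, (w.im - z.im) ^ 2 = Δx * (Δy ^ 3 / 12) := by
    have h := setIntegral_reProdIm_mul 1 (fun y => (y - z.im) ^ 2)
      (Set.Ioc (z.re - Δx / 2) (z.re + Δx / 2)) (Set.Ioc (z.im - Δy / 2) (z.im + Δy / 2))
    simpa [cell, integral_Ioc_sub_sq _ hy, hx] using h
  calc ∫ w in cell Δx Δy z, ‖w - z‖ ^ 2
      = ∫ w in cell Δx Δy z, ((w.re - z.re) ^ 2 + (w.im - z.im) ^ 2) := by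
        simp only [Complex.sq_norm, Complex.normSq_apply, Complex.sub_re, Complex.sub_im, ← pow_two]
    _ = (Δx ^ 2 + Δy ^ 2) / 12 * (Δx * Δy) := by
        rw [integral_add (integrableOn_cell _ _ _ (by fun_prop))
          (integrableOn_cell _ _ _ (by fun_prop)), hre, him]
        ring

lemma eq_of_mem_Ioc_of_mem_Ioc {d x : ℝ} (hd : 0 < d) {i j : ℤ}
    (hi : x ∈ Set.Ioc (i * d - d / 2) (i * d + d / 2))
    (hj : x ∈ Set.Ioc (j * d - d / 2) (j * d + d / 2)) : i = j := by
  have hij : (i : ℝ) < j + 1 := by nlinarith [hi.1, hj.2]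
  have hji : (j : ℝ) < i + 1 := by nlinarith [hj.1, hi.2]
  exact le_antisymm (Int.lt_add_one_iff.1 (mod_cast hij)) (Int.lt_add_one_iff.1 (mod_cast hji))

lemma pairwiseDisjoint_cell (hx : 0 < Δx) (hy : 0 < Δy) :
    (rectLattice Δx Δy).PairwiseDisjoint (cell Δx Δy) := by
  rintro z ⟨⟨i, hi⟩, j, hj⟩ z' ⟨⟨i', hi'⟩, j', hj'⟩ hne
  refine Set.disjoint_left.2 fun w ⟨hre, him⟩ ⟨hre', him'⟩ => hne ?_
  rw [Set.mem_preimage, hi] at hre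
  rw [Set.mem_preimage, hi'] at hre'
  rw [Set.mem_preimage, hj] at him
  rw [Set.mem_preimage, hj'] at him'
  apply Complex.ext
  · rw [hi, hi', eq_of_mem_Ioc_of_mem_Ioc hx hre hre']
  · rw [hj, hj', eq_of_mem_Ioc_of_mem_Ioc hy him him']

lemma mul_le_setIntegral_cell_max_zero_sub_norm (hx : Δx ∈ Set.Ioc 0 1) (hy : Δy ∈ Set.Ioc 0 1)
    (R : ℝ) (z : ℂ) :
    (R - ‖z‖ - 1 / √6) * (Δx * Δy) ≤ ∫ w in cell Δx Δy z, max 0 (R - ‖w‖) := by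
  have hpos : 0 < Δx * Δy := mul_pos hx.1 hy.1
  have hvol := volume_real_cell hx.1.le hy.1.le z
  rw [← hvol]
  refine mul_measureReal_le_setIntegral_max_zero_sub_norm ?_
    (integrableOn_cell _ _ _ (by fun_prop)) (by positivity) ?_ R
  · intro htop
    rw [Measure.real, htop] at hvol
    simp [hpos.ne] at hvol
  · have hmesh : (Δx ^ 2 + Δy ^ 2) / 12 ≤ (1 / √6) ^ 2 := by
      rw [div_pow, Real.sq_sqrt (by norm_num)]
      nlinarith [hx.1, hx.2, hy.1, hy.2]
    rw [hvol, setIntegral_cell_norm_sub_sq hx.1.le hy.1.le]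
    gcongr

lemma sum_sub_norm_mul_le {S : Finset ℂ} (hx : Δx ∈ Set.Ioc 0 1) (hy : Δy ∈ Set.Ioc 0 1)
    (hS : ↑S ⊆ rectLattice Δx Δy) {R : ℝ} (hR : 0 ≤ R) :
    (∑ z ∈ S, (R - ‖z‖ - 1 / √6)) * (Δx * Δy) ≤ Real.pi * R ^ 3 / 3 := by
  have hint : Integrable fun w : ℂ => max 0 (R - ‖w‖) := integrable_max_zero_sub_norm volume R
  calc (∑ z ∈ S, (R - ‖z‖ - 1 / √6)) * (Δx * Δy)
      = ∑ z ∈ S, (R - ‖z‖ - 1 / √6) * (Δx * Δy) := Finset.sum_mul ..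
    _ ≤ ∑ z ∈ S, ∫ w in cell Δx Δy z, max 0 (R - ‖w‖) :=
        Finset.sum_le_sum fun z _ => mul_le_setIntegral_cell_max_zero_sub_norm hx hy R z
    _ = ∫ w in ⋃ z ∈ S, cell Δx Δy z, max 0 (R - ‖w‖) :=
        (integral_biUnion_finset _ (fun _ _ => measurableSet_cell _ _ _)
          ((pairwiseDisjoint_cell hx.1 hy.1).subset hS) fun _ _ => hint.integrableOn).symm
    _ ≤ ∫ w : ℂ, max 0 (R - ‖w‖) :=
        setIntegral_le_integral hint (.of_forall fun w => le_max_left _ _)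
    _ = Real.pi * R ^ 3 / 3 := integral_complex_max_zero_sub_norm hR

lemma sqrt_card_mul_le {S : Finset ℂ} (hSne : S.Nonempty) (hx : Δx ∈ Set.Ioc 0 1)
    (hy : Δy ∈ Set.Ioc 0 1) (hS : ↑S ⊆ rectLattice Δx Δy) :
    √(S.card * (Δx * Δy)) ≤ 3 * √Real.pi / 2 * ((∑ z ∈ S, ‖z‖) / S.card + 1 / √6) := by
  have hD : 0 < Δx * Δy := mul_pos hx.1 hy.1
  have hk : (0 : ℝ) < S.card := mod_cast hSne.card_pos
  -- The radius of the disc whose area is that of all the cells.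
  set R := √(S.card * (Δx * Δy)) / √Real.pi with hRdef
  have hR : Real.pi * R ^ 2 = S.card * (Δx * Δy) := by
    rw [div_pow, Real.sq_sqrt (by positivity), Real.sq_sqrt Real.pi_nonneg]
    field_simp
  have hcone := sum_sub_norm_mul_le hx hy hS (R := R) (by positivity)
  have hsum : S.card * R - (∑ z ∈ S, ‖z‖) - S.card * (1 / √6) ≤ S.card * R / 3 := by
    refine le_of_mul_le_mul_right ?_ hD
    calc (S.card * R - (∑ z ∈ S, ‖z‖) - S.card * (1 / √6)) * (Δx * Δy)
        = (∑ z ∈ S, (R - ‖z‖ - 1 / √6)) * (Δx * Δy) := by simp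
      _ ≤ Real.pi * R ^ 3 / 3 := hcone
      _ = S.card * R / 3 * (Δx * Δy) := by linear_combination R / 3 * hR
  have hdiv : 2 / 3 * R ≤ (∑ z ∈ S, ‖z‖) / S.card + 1 / √6 := by
    rw [← sub_le_iff_le_add, le_div_iff₀ hk]
    linarith
  calc √(S.card * (Δx * Δy)) = 3 * √Real.pi / 2 * (2 / 3 * R) := by rw [hRdef]; field_simp
    _ ≤ 3 * √Real.pi / 2 * ((∑ z ∈ S, ‖z‖) / S.card + 1 / √6) := by gcongr

end Cell

section PlaneCardBound

open Finset

variable {p : ℝ}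

lemma norm_rpow_le_mul_abs_re_rpow_add_abs_im_rpow (hp : 0 < p) (z : ℂ) :
    ‖z‖ ^ p ≤ (2 ^ max 0 (1 / 2 - 1 / p)) ^ p * (|z.re| ^ p + |z.im| ^ p) := by
  have hsq : ∀ x : ℝ, 0 ≤ x → x ^ p = (x ^ 2) ^ (p / 2) := fun x hx => by
    rw [← Real.rpow_natCast, ← Real.rpow_mul hx]
    congr 1
    push_cast
    ring
  rw [hsq _ (norm_nonneg z), hsq _ (abs_nonneg z.re), hsq _ (abs_nonneg z.im), sq_abs, sq_abs,
    Complex.sq_norm, Complex.normSq_apply, ← sq, ← sq, ← Real.rpow_mul (by norm_num),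
    max_mul_of_nonneg _ _ hp.le]
  have hexp : (1 / 2 - 1 / p) * p = p / 2 - 1 := by field_simp
  rw [zero_mul, hexp]
  rcases le_total 2 p with h | h
  · rw [max_eq_right (by linarith)]
    have hconv := NNReal.rpow_add_le_mul_rpow_add_rpow ⟨z.re ^ 2, sq_nonneg _⟩
      ⟨z.im ^ 2, sq_nonneg _⟩ (p := p / 2) (by linarith)
    exact_mod_cast hconv
  · rw [max_eq_left (by linarith), Real.rpow_zero, one_mul]
    exact Real.rpow_add_le_add_rpow (by positivity) (by positivity) (by positivity) (by linarith)

variable {Δx Δy : ℝ}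

lemma card_div_le_of_sum_norm_rpow_le (hx : Δx ∈ Set.Ioc 0 1) (hy : Δy ∈ Set.Ioc 0 1)
    {S : Finset ℂ} (hSne : S.Nonempty) (hS : ↑S ⊆ rectLattice Δx Δy) {N C : ℝ} (hp : 1 ≤ p)
    (hN : #S ≤ N) (hC : ∑ z ∈ S, ‖z‖ ^ p ≤ N * C) :
    #S / N ≤ (3 * √Real.pi / 2 * (C ^ (1 / p) + 1 / √6)) ^ (2 * p / (2 + p)) /
      (N * (Δx * Δy)) ^ (p / (2 + p)) := by
  have hk : (0 : ℝ) < #S := mod_cast hSne.card_pos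
  have hD : 0 < Δx * Δy := mul_pos hx.1 hy.1
  have hN0 : 0 < N := by linarith
  have hmean := sum_div_card_le_rpow_mul_rpow hSne norm_nonneg hp hN0 hC
  have hC0 : 0 ≤ C := nonneg_of_mul_nonneg_right
    ((sum_nonneg fun z _ => Real.rpow_nonneg (norm_nonneg z) p).trans hC) hN0
  set r := N / #S with hrdef
  have hr : 1 ≤ r := (one_le_div hk).2 hN
  have hrp : 1 ≤ r ^ (1 / p) := Real.one_le_rpow hr (by positivity)
  set K := 3 * √Real.pi / 2 * (C ^ (1 / p) + 1 / √6)
  have hmain : √(N * (Δx * Δy)) ≤ K * r ^ (1 / 2 + 1 / p) := by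
    calc √(N * (Δx * Δy)) = √r * √(#S * (Δx * Δy)) := by
          rw [← Real.sqrt_mul (by positivity), hrdef]
          field_simp
      _ ≤ √r * (3 * √Real.pi / 2 * ((∑ z ∈ S, ‖z‖) / #S + 1 / √6)) := by
          gcongr
          exact sqrt_card_mul_le hSne hx hy hS
      _ ≤ √r * (3 * √Real.pi / 2 * (C ^ (1 / p) * r ^ (1 / p) + 1 / √6 * r ^ (1 / p))) := by
          gcongr
          exact le_mul_of_one_le_right (by positivity) hrp
      _ = K * r ^ (1 / 2 + 1 / p) := by
          rw [Real.rpow_add (by positivity), ← Real.sqrt_eq_rpow]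
          ring
  have hsqrt : √(N * (Δx * Δy)) ^ (2 * p / (2 + p)) = (N * (Δx * Δy)) ^ (p / (2 + p)) := by
    rw [Real.sqrt_eq_rpow, ← Real.rpow_mul (by positivity)]
    congr 1
    ring
  rw [← inv_div, ← hsqrt]
  exact inv_le_rpow_div_rpow (by positivity) (by positivity) (by positivity) (by positivity)
    (by field_simp; ring) hmain

lemma sum_support_norm_rpow_le {c : ℝ × ℝ →₀ ℕ} (hp : 0 < p) {cX cY : ℝ}
    (hcX : ∑ᶠ z, freq c z * |z.1| ^ p ≤ cX) (hcY : ∑ᶠ z, freq c z * |z.2| ^ p ≤ cY) :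
    ∑ z ∈ c.support, ‖Complex.equivRealProd.symm z‖ ^ p ≤
      c.degree * ((2 ^ max 0 (1 / 2 - 1 / p)) ^ p * (cX + cY)) := by
  have hX : ∑ z ∈ c.support, |z.1| ^ p ≤ c.degree * cX :=
    (sum_support_le_degree_mul_finsum fun z => by positivity).trans (by gcongr)
  have hY : ∑ z ∈ c.support, |z.2| ^ p ≤ c.degree * cY :=
    (sum_support_le_degree_mul_finsum fun z => by positivity).trans (by gcongr)
  calc ∑ z ∈ c.support, ‖Complex.equivRealProd.symm z‖ ^ p
      ≤ ∑ z ∈ c.support, (2 ^ max 0 (1 / 2 - 1 / p)) ^ p * (|z.1| ^ p + |z.2| ^ p) :=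
        sum_le_sum fun z _ => norm_rpow_le_mul_abs_re_rpow_add_abs_im_rpow hp _
    _ ≤ (2 ^ max 0 (1 / 2 - 1 / p)) ^ p * (c.degree * cX + c.degree * cY) := by
        rw [← mul_sum, sum_add_distrib]
        gcongr
    _ = c.degree * ((2 ^ max 0 (1 / 2 - 1 / p)) ^ p * (cX + cY)) := by ring

lemma card_support_div_degree_le_c1 {c : ℝ × ℝ →₀ ℕ} (hc : c ≠ 0) (hx : Δx ∈ Set.Ioc 0 1)
    (hy : Δy ∈ Set.Ioc 0 1)
    (hlattice : ∀ z ∈ c.support, (∃ i : ℤ, z.1 = i * Δx) ∧ ∃ j : ℤ, z.2 = j * Δy)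
    (hp : 1 ≤ p) {cX cY : ℝ} (hcX : ∑ᶠ z, freq c z * |z.1| ^ p ≤ cX)
    (hcY : ∑ᶠ z, freq c z * |z.2| ^ p ≤ cY) :
    #c.support / c.degree ≤ c1 p cX cY / (c.degree * (Δx * Δy)) ^ (p / (2 + p)) := by
  set A : ℝ := 2 ^ max 0 (1 / 2 - 1 / p)
  have hcXY : 0 ≤ cX + cY :=
    add_nonneg ((finsum_nonneg fun z => by rw [freq]; positivity).trans hcX)
      ((finsum_nonneg fun z => by rw [freq]; positivity).trans hcY)
  have hroot : (A ^ p * (cX + cY)) ^ (1 / p) = A * (cX + cY) ^ (1 / p) := by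
    rw [Real.mul_rpow (by positivity) hcXY, ← Real.rpow_mul (by positivity),
      mul_one_div_cancel (by positivity), Real.rpow_one]
  set S : Finset ℂ := c.support.map Complex.equivRealProd.symm.toEmbedding
  have hS : ↑S ⊆ rectLattice Δx Δy := by
    simp only [S, coe_map, Set.image_subset_iff]
    exact hlattice
  have hmoment : ∑ z ∈ S, ‖z‖ ^ p ≤ c.degree * (A ^ p * (cX + cY)) := by
    rw [sum_map]
    exact sum_support_norm_rpow_le (by positivity) hcX hcY
  have hcard := card_div_le_of_sum_norm_rpow_le hx hy
    ((Finsupp.support_nonempty_iff.2 hc).map (f := Complex.equivRealProd.symm.toEmbedding)) hS hp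
    (mod_cast (card_map _).trans_le (card_support_le_degree c)) hmoment
  rwa [hroot, card_map] at hcard

end PlaneCardBound

lemma mul_rpow_neg_rpow {x : ℝ} (hx : 0 < x) (a e : ℝ) :
    (x * x ^ (-a)) ^ e = x ^ ((1 - a) * e) := by
  have hmul : x * x ^ (-a) = x ^ (1 - a) := by
    rw [sub_eq_add_neg, Real.rpow_add hx, Real.rpow_one]
  rw [hmul, ← Real.rpow_mul hx.le]

theorem size_of_type_class_general {n : ℕ} {b p cX cY Δx Δy : ℝ} (hb : 1 < b) (hp : 1 ≤ p)
    (hx : Δx ∈ Set.Ioc 0 1) (hy : Δy ∈ Set.Ioc 0 1) {P : ℝ × ℝ → ℝ}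
    (hP : IsJointType n Δx Δy P) (hcX : (∑ᶠ x, margX P x * |x| ^ p) ≤ cX)
    (hcY : (∑ᶠ y, margY P y * |y| ^ p) ≤ cY) :
    (entropy b P - c1 p cX cY * Real.logb b (n + 1) / (n * (Δx * Δy)) ^ (p / (2 + p)) ≤
        1 / (n : ℝ) * Real.logb b (typeClass n P).ncard ∧
      1 / (n : ℝ) * Real.logb b (typeClass n P).ncard ≤ entropy b P) ∧
    (entropy b (margX P) - c2 p cX * Real.logb b (n + 1) / (n * Δx) ^ (p / (1 + p)) ≤
        1 / (n : ℝ) * Real.logb b (typeClass n (margX P)).ncard ∧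
      1 / (n : ℝ) * Real.logb b (typeClass n (margX P)).ncard ≤ entropy b (margX P)) ∧
    (entropy b (margY P) - c3 p cY * Real.logb b (n + 1) / (n * Δy) ^ (p / (1 + p)) ≤
        1 / (n : ℝ) * Real.logb b (typeClass n (margY P)).ncard ∧
      1 / (n : ℝ) * Real.logb b (typeClass n (margY P)).ncard ≤ entropy b (margY P)) := by
  obtain ⟨c, hc, rfl, rfl⟩ := hP.exists_eq_freq
  have hlattice := hP.lattice_of_mem_support
  rw [margX_freq] at hcX
  rw [margY_freq] at hcY
  have hjoint := card_support_div_degree_le_c1 hc hx hy hlattice hp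
    ((finsum_freq_mapDomain_mul _ c _).symm.trans_le hcX)
    ((finsum_freq_mapDomain_mul _ c _).symm.trans_le hcY)
  have hmargX := card_support_div_degree_le_c2 (mapDomain_ne_zero Prod.fst hc) hx
    (forall_mem_support_mapDomain fun z hz => (hlattice z hz).1) hp hcX
  have hmargY := card_support_div_degree_le_c2 (mapDomain_ne_zero Prod.snd hc) hy
    (forall_mem_support_mapDomain fun z hz => (hlattice z hz).2) hp hcY
  have hdeg : ∀ {f : ℝ × ℝ → ℝ}, (c.mapDomain f).degree = c.degree := Finsupp.degree_mapDomain _ _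
  rw [margX_freq, margY_freq]
  rw [hdeg] at hmargX hmargY
  exact ⟨typeClass_bounds_of_card_support_le hb hc rfl hjoint,
    typeClass_bounds_of_card_support_le hb (mapDomain_ne_zero _ hc) hdeg hmargX,
    typeClass_bounds_of_card_support_le hb (mapDomain_ne_zero _ hc) hdeg hmargY⟩

/-- Lemma 3 (Size of a type class): exponential bounds on the sizes of the type classes
of a joint type and of its marginals, under generalized power constraints. -/
theorem size_of_type_class
    (n : ℕ) (hn : 0 < n) (b p cX cY α β gam : ℝ) (hb : 1 < b) (hp : 1 ≤ p)
    (hα : α ∈ Set.Ioo (0 : ℝ) 1) (hβ : β ∈ Set.Ioo (0 : ℝ) 1) (hγ : gam ∈ Set.Ioo (0 : ℝ) 1)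
    (hsum : α + β + gam = 1)
    (P : ℝ × ℝ → ℝ) (hP : IsJointType n ((n : ℝ) ^ (-α)) ((n : ℝ) ^ (-β)) P)
    (hcX : (∑ᶠ x, margX P x * |x| ^ p) ≤ cX)
    (hcY : (∑ᶠ y, margY P y * |y| ^ p) ≤ cY) :
    (entropy b P - c1 p cX cY * Real.logb b ((n : ℝ) + 1) / (n : ℝ) ^ (gam * p / (2 + p)) ≤
        (1 / (n : ℝ)) * Real.logb b ((typeClass n P).ncard) ∧
      (1 / (n : ℝ)) * Real.logb b ((typeClass n P).ncard) ≤ entropy b P) ∧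
    (entropy b (margX P) -
          c2 p cX * Real.logb b ((n : ℝ) + 1) / (n : ℝ) ^ ((1 - α) * p / (1 + p)) ≤
        (1 / (n : ℝ)) * Real.logb b ((typeClass n (margX P)).ncard) ∧
      (1 / (n : ℝ)) * Real.logb b ((typeClass n (margX P)).ncard) ≤ entropy b (margX P)) ∧
    (entropy b (margY P) -
          c3 p cY * Real.logb b ((n : ℝ) + 1) / (n : ℝ) ^ ((1 - β) * p / (1 + p)) ≤
        (1 / (n : ℝ)) * Real.logb b ((typeClass n (margY P)).ncard) ∧
      (1 / (n : ℝ)) * Real.logb b ((typeClass n (margY P)).ncard) ≤ entropy b (margY P)) := by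
  have hn1 : (1 : ℝ) ≤ n := mod_cast hn
  have hn0 : (0 : ℝ) < n := by positivity
  have hstep : ∀ a ∈ Set.Ioo (0 : ℝ) 1, (n : ℝ) ^ (-a) ∈ Set.Ioc 0 1 := fun a ha =>
    ⟨by positivity, Real.rpow_le_one_of_one_le_of_nonpos hn1 (neg_nonpos.2 ha.1.le)⟩
  have hgam : 1 - (α + β) = gam := by linarith
  have h := size_of_type_class_general hb hp (hstep α hα) (hstep β hβ) hP hcX hcY
  simpa only [← Real.rpow_add hn0, ← neg_add, mul_rpow_neg_rpow hn0, hgam, ← mul_div_assoc] using h
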